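/- Let M₁,…,M_h be symmetric m×m matrices over ℚ and M[y] = Σ_{i=1}^h y_i M_i. Suppose the 3×3 minors of M[y] are not all zero, let φ(y) ∈ ℚ[y₁,…,y_h] be a greatest common divisor of all 3×3 minors of M[y], and assume φ is a non-constant polynomial. Assume the rank r of M[y] over ℚ(y₁,…,y_h) satisfies r ≥ 5, and that M₁ = diag(a₁,…,a_r,0,…,0) with a_i ≠ 0 for all i. Then there exists an invertible matrix T ∈ GL_h(ℚ) such that, writing M[Tz] = Σ_{i=1}^h z_i N_i for symmetric rational matrices N₁,…,N_h, the matrix N₁ has rank r and every 3×3 minor of Σ_{i=2}^h z_i N_i is the zero polynomial in z₂,…,z_h (equivalently, Σ_{i=2}^h c_i N_i has rank at most 2 for every (c₂,…,c_h)). -/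

import Mathlib

open Matrix MvPolynomial

/-! Let `p` be a prime factor of `φ`. Passing from the minors of size `n` to those of size `n + 1`
by `det (adj A) = (det A) ^ n` raises the power of `p` dividing all of them by at least one, so `p`
dividing all minors of size `k + 1` forces `p ^ (k + 1)` to divide every minor of size `2k + 1`.
Such a minor is a form of degree `2k + 1`, and if it is nonzero then `p` has degree at most one.
The leading form of a divisor of a form is again a divisor, so a linear form `ℓ` divides all
minors of size `k + 1`: on the hyperplane `ℓ = 0` the pencil has rank at most `k`. It remains to
take `ℓ` as the first coordinate. Here `k = 2`. -/

section Minors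

variable {K m n : Type*} [Field K] [Finite m] [Fintype n]

theorem exists_linearIndependent_rows_of_le_rank (A : Matrix m n K) {k : ℕ} (hk : k ≤ A.rank) :
    ∃ ρ : Fin k → m, LinearIndependent K fun i => A (ρ i) := by
  rw [rank_eq_finrank_span_row] at hk
  obtain ⟨f, hf, -, hli⟩ := Submodule.exists_fun_fin_finrank_span_eq K (Set.range A.row)
  choose ρ hρ using hf
  have hrows : (fun i => A (ρ (Fin.castLE hk i))) = f ∘ Fin.castLE hk := funext fun i => hρ _
  exact ⟨ρ ∘ Fin.castLE hk, hrows ▸ hli.comp _ (Fin.castLE_injective hk)⟩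

theorem exists_submatrix_det_ne_zero_of_le_rank (A : Matrix m n K) {k : ℕ} (hk : k ≤ A.rank) :
    ∃ (ρ : Fin k → m) (σ : Fin k → n), ρ.Injective ∧ σ.Injective ∧
      (A.submatrix ρ σ).det ≠ 0 := by
  obtain ⟨ρ, hρ⟩ := exists_linearIndependent_rows_of_le_rank A hk
  have hrank : (A.submatrix ρ id)ᵀ.rank = k := by
    rw [rank_transpose, LinearIndependent.rank_matrix (M := A.submatrix ρ id) hρ, Fintype.card_fin]
  obtain ⟨σ, hσ⟩ := exists_linearIndependent_rows_of_le_rank _ hrank.ge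
  refine ⟨ρ, σ, hρ.injective.of_comp (f := A), hσ.injective.of_comp (f := (A.submatrix ρ id)ᵀ), ?_⟩
  have hunit : IsUnit (A.submatrix ρ σ)ᵀ := linearIndependent_rows_iff_isUnit.1 hσ
  rw [← det_transpose]
  exact ((isUnit_iff_isUnit_det _).1 hunit).ne_zero

end Minors

section Divisibility

theorem pow_succ_dvd_of_pow_dvd_pow {R : Type*} [CommMonoidWithZero R] [IsCancelMulZero R]
    {p d : R} (hp : Prime p) {a j n : ℕ} (ha : n * j < a) (h : p ^ a ∣ d ^ n) :
    p ^ (j + 1) ∣ d := by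
  rw [pow_dvd_iff_le_emultiplicity, emultiplicity_pow hp] at h
  rw [pow_dvd_iff_le_emultiplicity]
  by_contra! hlt
  have hle : emultiplicity p d ≤ j := Order.le_of_lt_add_one (mod_cast hlt)
  have hmul : (a : ℕ∞) ≤ n * j := h.trans (by gcongr)
  exact ha.not_ge (mod_cast hmul)

theorem pow_succ_dvd_det_pow_of_dvd_minors {R : Type*} [CommRing R] {n : ℕ} {q : R}
    (A : Matrix (Fin (n + 1)) (Fin (n + 1)) R)
    (hA : ∀ ρ σ : Fin n → Fin (n + 1), ρ.Injective → σ.Injective → q ∣ (A.submatrix ρ σ).det) :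
    q ^ (n + 1) ∣ A.det ^ n := by
  have hadj : ∀ a b, q ∣ A.adjugate a b := fun a b => by
    rw [adjugate_fin_succ_eq_det_submatrix]
    exact (hA _ _ Fin.succAbove_right_injective Fin.succAbove_right_injective).mul_left _
  choose B hB using hadj
  have hsmul : A.adjugate = q • of B := Matrix.ext hB
  have hdet := det_adjugate A
  rw [hsmul, det_smul, Fintype.card_fin, Nat.add_sub_cancel] at hdet
  exact Dvd.intro _ hdet

theorem pow_succ_dvd_det_of_prime_dvd_minors {R : Type*} [CommRing R] [IsDomain R] {p : R}
    (hp : Prime p) {k : ℕ} (j : ℕ) (A : Matrix (Fin (k + j)) (Fin (k + j)) R)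
    (hA : ∀ ρ σ : Fin k → Fin (k + j), ρ.Injective → σ.Injective → p ∣ (A.submatrix ρ σ).det) :
    p ^ (j + 1) ∣ A.det := by
  induction j with
  | zero => simpa using hA id id Function.injective_id Function.injective_id
  | succ j ih =>
    have hminors : ∀ ρ σ : Fin (k + j) → Fin (k + j + 1), ρ.Injective → σ.Injective →
        p ^ (j + 1) ∣ (A.submatrix ρ σ).det := fun ρ σ hρ hσ => ih _ fun ρ' σ' hρ' hσ' => by
      rw [submatrix_submatrix]
      exact hA _ _ (hρ.comp hρ') (hσ.comp hσ')
    have hpow : p ^ ((j + 1) * (k + j + 1)) ∣ A.det ^ (k + j) := by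
      rw [pow_mul]
      exact pow_succ_dvd_det_pow_of_dvd_minors A hminors
    exact pow_succ_dvd_of_pow_dvd_pow hp (by nlinarith) hpow

end Divisibility

section Forms

variable {σ R : Type*} [CommSemiring R]

theorem exists_eval_eq_dotProduct_of_isHomogeneous_one [Fintype σ] {p : MvPolynomial σ R}
    (hp : p.IsHomogeneous 1) : ∃ l : σ → R, ∀ y, eval y p = l ⬝ᵥ y := by
  rw [← mem_homogeneousSubmodule, homogeneousSubmodule_one_eq_span_X,
    Submodule.mem_span_range_iff_exists_fun] at hp
  obtain ⟨l, rfl⟩ := hp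
  exact ⟨l, fun y => by simp [dotProduct, smul_eval]⟩

theorem homogeneousComponent_add_mul {p q : MvPolynomial σ R} {a b : ℕ}
    (hp : p.totalDegree ≤ a) (hq : q.totalDegree ≤ b) :
    homogeneousComponent (a + b) (p * q) =
      homogeneousComponent a p * homogeneousComponent b q := by
  classical
  ext d
  by_cases hd : d.degree = a + b
  · rw [coeff_homogeneousComponent, if_pos hd, coeff_mul, coeff_mul]
    refine Finset.sum_congr rfl fun ⟨u, v⟩ huv => ?_
    dsimp only
    have hdeg : u.degree + v.degree = a + b := by
      rw [← map_add, Finset.HasAntidiagonal.mem_antidiagonal.1 huv, hd]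
    rw [coeff_homogeneousComponent, coeff_homogeneousComponent]
    rcases lt_trichotomy u.degree a with hu | hu | hu
    · have hv : coeff v q = 0 := coeff_eq_zero_of_totalDegree_lt (by
        rw [← Finsupp.degree_apply]; omega)
      simp [hv]
    · rw [if_pos hu, if_pos (by omega)]
    · have hu' : coeff u p = 0 := coeff_eq_zero_of_totalDegree_lt (by
        rw [← Finsupp.degree_apply]; omega)
      simp [hu']
  · rw [coeff_homogeneousComponent, if_neg hd, IsHomogeneous.coeff_eq_zero
      ((homogeneousComponent_isHomogeneous a p).mul (homogeneousComponent_isHomogeneous b q)) hd]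

theorem homogeneousComponent_totalDegree_dvd [NoZeroDivisors R] {p f : MvPolynomial σ R} {n : ℕ}
    (hf : f.IsHomogeneous n) (hpf : p ∣ f) :
    homogeneousComponent p.totalDegree p ∣ f := by
  obtain rfl | hf0 := eq_or_ne f 0
  · exact dvd_zero _
  obtain ⟨q, rfl⟩ := hpf
  have hn : n = p.totalDegree + q.totalDegree := by
    rw [← hf.totalDegree hf0,
      totalDegree_mul_of_isDomain (left_ne_zero_of_mul hf0) (right_ne_zero_of_mul hf0)]
  rw [← homogeneousComponent_eq_self hf, hn, homogeneousComponent_add_mul le_rfl le_rfl]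
  exact dvd_mul_right _ _

theorem totalDegree_pow_of_noZeroDivisors [NoZeroDivisors R] (p : MvPolynomial σ R) (n : ℕ) :
    (p ^ n).totalDegree = n * p.totalDegree := by
  obtain rfl | hp := eq_or_ne p 0
  · cases n <;> simp
  induction n with
  | zero => simp
  | succ n ih =>
    rw [pow_succ, totalDegree_mul_of_isDomain (pow_ne_zero n hp) hp, ih, add_one_mul]

end Forms

section FormsOverRings

variable {σ R : Type*} [CommRing R]

theorem isHomogeneous_det {n : Type*} [Fintype n] [DecidableEq n]
    {A : Matrix n n (MvPolynomial σ R)} {d : ℕ} (hA : ∀ i j, (A i j).IsHomogeneous d) :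
    A.det.IsHomogeneous (Fintype.card n * d) := by
  rw [det_apply']
  refine IsHomogeneous.sum _ _ _ fun s _ => ?_
  have hprod : (∏ i, A (s i) i).IsHomogeneous (∑ _i : n, d) :=
    IsHomogeneous.prod _ _ _ fun i _ => hA (s i) i
  simpa using hprod.C_mul ((Equiv.Perm.sign s : ℤ) : R)

theorem totalDegree_le_one_of_prime_dvd_minors [IsDomain R] {p : MvPolynomial σ R} (hp : Prime p)
    {k : ℕ} (A : Matrix (Fin (k + 1 + k)) (Fin (k + 1 + k)) (MvPolynomial σ R))
    (hA : ∀ i j, (A i j).IsHomogeneous 1) (hdet : A.det ≠ 0)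
    (hdvd : ∀ ρ τ : Fin (k + 1) → Fin (k + 1 + k), ρ.Injective → τ.Injective →
      p ∣ (A.submatrix ρ τ).det) :
    p.totalDegree ≤ 1 := by
  obtain ⟨q, hq⟩ := pow_succ_dvd_det_of_prime_dvd_minors hp k A hdvd
  have hdeg : A.det.totalDegree = k + 1 + k := by
    simpa using (isHomogeneous_det hA).totalDegree hdet
  rw [hq] at hdet
  rw [hq, totalDegree_mul_of_isDomain (left_ne_zero_of_mul hdet) (right_ne_zero_of_mul hdet),
    totalDegree_pow_of_noZeroDivisors] at hdeg
  by_contra! hlt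
  nlinarith

theorem totalDegree_ne_zero_of_irreducible {K : Type*} [Field K] {p : MvPolynomial σ K}
    (hp : Irreducible p) : p.totalDegree ≠ 0 := by
  intro h0
  obtain ⟨c, rfl⟩ : ∃ c, p = C c := ⟨_, totalDegree_eq_zero_iff_eq_C.1 h0⟩
  have hc : c ≠ 0 := fun hc => hp.ne_zero (by rw [hc, C_0])
  exact hp.not_isUnit (hc.isUnit.map C)

end FormsOverRings

section Pencils

variable {R ι m n : Type*} [CommRing R] [Fintype ι]

/-- The generic member `M[y] = ∑ yᵢ Mᵢ` of the pencil spanned by the matrices `Mᵢ`: a matrix of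
linear forms in indeterminates `yᵢ`. Its specialization at scalars `yᵢ` is written
`∑ i, y i • M i`. -/
noncomputable def genericPencil (M : ι → Matrix m n R) : Matrix m n (MvPolynomial ι R) :=
  of fun a b => ∑ i, X i * C (M i a b)

theorem isHomogeneous_genericPencil_apply (M : ι → Matrix m n R) (a : m) (b : n) :
    (genericPencil M a b).IsHomogeneous 1 :=
  IsHomogeneous.sum _ _ _ fun i _ => by
    rw [mul_comm]
    exact isHomogeneous_C_mul_X _ _

theorem eval_det_submatrix_genericPencil {k : Type*} [Fintype k] [DecidableEq k]
    (M : ι → Matrix m n R) (ρ : k → m) (σ : k → n) (y : ι → R) :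
    eval y ((genericPencil M).submatrix ρ σ).det = ((∑ i, y i • M i).submatrix ρ σ).det := by
  rw [RingHom.map_det]
  congr 1
  ext a b
  simp [genericPencil, Matrix.sum_apply]

end Pencils

section PencilsOverFields

variable {K ι m n : Type*} [Field K] [Fintype ι] [Finite m] [Fintype n]

theorem rank_le_of_dvd_minors_of_eval_eq_zero {M : ι → Matrix m n K} {k : ℕ}
    {q : MvPolynomial ι K}
    (hq : ∀ (ρ : Fin (k + 1) → m) (σ : Fin (k + 1) → n), ρ.Injective → σ.Injective →
      q ∣ ((genericPencil M).submatrix ρ σ).det)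
    {y : ι → K} (hy : eval y q = 0) : (∑ i, y i • M i).rank ≤ k := by
  by_contra! hlt
  obtain ⟨ρ, σ, hρ, hσ, hdet⟩ := exists_submatrix_det_ne_zero_of_le_rank _ hlt
  have hdvd := map_dvd (eval y) (hq ρ σ hρ hσ)
  rw [hy, zero_dvd_iff, eval_det_submatrix_genericPencil] at hdvd
  exact hdet hdvd

theorem exists_isHomogeneous_one_dvd_minors {M : ι → Matrix m n K} {k : ℕ} {e : ι → K}
    (he : 2 * k + 1 ≤ (∑ i, e i • M i).rank) {φ : MvPolynomial ι K} (hφ : 0 < φ.totalDegree)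
    (hdvd : ∀ (ρ : Fin (k + 1) → m) (σ : Fin (k + 1) → n), ρ.Injective → σ.Injective →
      φ ∣ ((genericPencil M).submatrix ρ σ).det) :
    ∃ q : MvPolynomial ι K, q.IsHomogeneous 1 ∧
      ∀ (ρ : Fin (k + 1) → m) (σ : Fin (k + 1) → n), ρ.Injective → σ.Injective →
        q ∣ ((genericPencil M).submatrix ρ σ).det := by
  have hφunit : ¬ IsUnit φ := fun h => hφ.ne' (isUnit_iff_totalDegree_of_isReduced.1 h).2
  have hφzero : φ ≠ 0 := by
    rintro rfl
    simp at hφ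
  obtain ⟨p, hirr, hpφ⟩ := WfDvdMonoid.exists_irreducible_factor hφunit hφzero
  have hpdvd : ∀ (ρ : Fin (k + 1) → m) (σ : Fin (k + 1) → n), ρ.Injective → σ.Injective →
      p ∣ ((genericPencil M).submatrix ρ σ).det := fun ρ σ hρ hσ => hpφ.trans (hdvd ρ σ hρ hσ)
  have hrank : k + 1 + k ≤ (∑ i, e i • M i).rank := by omega
  obtain ⟨ρ, σ, hρ, hσ, hdet⟩ := exists_submatrix_det_ne_zero_of_le_rank _ hrank
  rw [← eval_det_submatrix_genericPencil] at hdet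
  have hdeg_le : p.totalDegree ≤ 1 :=
    totalDegree_le_one_of_prime_dvd_minors hirr.prime ((genericPencil M).submatrix ρ σ)
      (fun _ _ => isHomogeneous_genericPencil_apply _ _ _) (fun h0 => hdet (by rw [h0, map_zero]))
      fun ρ' σ' hρ' hσ' => hpdvd _ _ (hρ.comp hρ') (hσ.comp hσ')
  have hdeg : p.totalDegree = 1 :=
    hdeg_le.antisymm (Nat.one_le_iff_ne_zero.2 (totalDegree_ne_zero_of_irreducible hirr))
  refine ⟨homogeneousComponent p.totalDegree p, ?_, fun ρ σ hρ hσ => ?_⟩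
  · simpa only [hdeg] using homogeneousComponent_isHomogeneous 1 p
  · exact homogeneousComponent_totalDegree_dvd
      (isHomogeneous_det fun _ _ => isHomogeneous_genericPencil_apply _ _ _) (hpdvd ρ σ hρ hσ)

end PencilsOverFields

section Coordinates

theorem sum_smul_sum_smul_eq_sum_mulVec_smul {R V ι κ : Type*} [CommSemiring R] [AddCommMonoid V]
    [Module R V] [Fintype ι] [Fintype κ] (T : Matrix ι κ R) (c : κ → R) (v : ι → V) :
    ∑ j, c j • ∑ i, T i j • v i = ∑ i, (T *ᵥ c) i • v i := by
  simp only [mulVec, dotProduct, Finset.smul_sum, Finset.sum_smul, smul_smul, mul_comm (c _)]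
  exact Finset.sum_comm

variable {K ι : Type*} [Field K] [Fintype ι] [DecidableEq ι]

theorem exists_isUnit_det_dotProduct_mulVec_eq {l : ι → K} {z : ι} (hz : l z ≠ 0) :
    ∃ T : Matrix ι ι K, IsUnit T.det ∧ T.col z = Pi.single z (l z)⁻¹ ∧
      ∀ c, l ⬝ᵥ (T *ᵥ c) = c z := by
  let S : Matrix ι ι K := updateRow 1 z l
  have hdet : S.det = l z := by
    rw [← cramer_transpose_apply, transpose_one, cramer_one, Module.End.one_apply]
  have hS : IsUnit S.det := hdet ▸ hz.isUnit
  have hcol : S *ᵥ Pi.single z (l z)⁻¹ = Pi.single z 1 := by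
    ext i
    obtain rfl | hi := eq_or_ne i z <;> simp [S, *]
  refine ⟨S⁻¹, S.isUnit_nonsing_inv_det hS, ?_, fun c => ?_⟩
  · rw [← mulVec_single_one, ← hcol, mulVec_mulVec, nonsing_inv_mul S hS, one_mulVec]
  · calc
      l ⬝ᵥ (S⁻¹ *ᵥ c) = (S *ᵥ (S⁻¹ *ᵥ c)) z := by simp [S, mulVec]
      _ = c z := by rw [mulVec_mulVec, mul_nonsing_inv S hS, one_mulVec]

theorem rank_diagonal_eq_of_ne_zero_iff_lt {m r : ℕ} (hrm : r ≤ m) {d : Fin m → K}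
    (hd : ∀ a, d a ≠ 0 ↔ a.val < r) : (diagonal d).rank = r := by
  classical
  simp only [rank_diagonal, Fintype.card_subtype, hd, Fin.card_filter_val_lt, hrm, inf_of_le_right]

end Coordinates

theorem stmt6_general {K ι m n : Type*} [Field K] [Fintype ι] [DecidableEq ι] [Finite m]
    [Fintype n] (k : ℕ) (M : ι → Matrix m n K) (z : ι) (hz : 2 * k + 1 ≤ (M z).rank)
    (φ : MvPolynomial ι K) (hφ : 0 < φ.totalDegree)
    (hdvd : ∀ (ρ : Fin (k + 1) → m) (σ : Fin (k + 1) → n), ρ.Injective → σ.Injective →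
      φ ∣ ((genericPencil M).submatrix ρ σ).det) :
    ∃ T : Matrix ι ι K, IsUnit T.det ∧ (∑ i, T i z • M i).rank = (M z).rank ∧
      ∀ c : ι → K, c z = 0 → (∑ j, c j • ∑ i, T i j • M i).rank ≤ k := by
  have hMz : ∑ i, (Pi.single z 1 : ι → K) i • M i = M z := by simp [Pi.single_apply]
  obtain ⟨q, hqhom, hqdvd⟩ := exists_isHomogeneous_one_dvd_minors (hMz ▸ hz) hφ hdvd
  obtain ⟨l, hl⟩ := exists_eval_eq_dotProduct_of_isHomogeneous_one hqhom
  have hlz : l z ≠ 0 := fun h0 => by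
    have hle := rank_le_of_dvd_minors_of_eval_eq_zero hqdvd (y := Pi.single z 1) (by simp [hl, h0])
    rw [hMz] at hle
    omega
  obtain ⟨T, hT, hcol, hker⟩ := exists_isUnit_det_dotProduct_mulVec_eq hlz
  refine ⟨T, hT, ?_, fun c hc => ?_⟩
  · have hNz : ∑ i, T i z • M i = (l z)⁻¹ • M z := by
      simp [← col_apply, hcol, Pi.single_apply]
    rw [hNz, rank_smul_of_mem_nonZeroDivisors _ (mem_nonZeroDivisors_of_ne_zero (inv_ne_zero hlz))]
  · rw [sum_smul_sum_smul_eq_sum_mulVec_smul]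
    exact rank_le_of_dvd_minors_of_eval_eq_zero hqdvd (by rw [hl, hker, hc])

/-- If the `3 × 3` minors of the pencil `M[y]` have a non-constant gcd `φ`,
the generic rank is `r ≥ 5`, and `M₁ = diag(a₁,…,a_r,0,…,0)` with all `a_i ≠ 0`, then after a
rational linear change of the `y`-variables the pencil becomes `Σ zᵢ Nᵢ` with `rank N₁ = r`
and `Σ_{i≥2} cᵢ Nᵢ` of rank at most `2` for all scalars `cᵢ`. -/
theorem stmt6 (h m r : ℕ) (hh : 0 < h) (hr5 : 5 ≤ r)
    (M : Fin h → Matrix (Fin m) (Fin m) ℚ) (hsym : ∀ i, (M i).IsSymm)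
    (φ : MvPolynomial (Fin h) ℚ)
    (hminorsnz : ∃ ρ σ : Fin 3 → Fin m, Function.Injective ρ ∧ Function.Injective σ ∧
      ((Matrix.of fun a b => ∑ i, X i * C (M i a b)).submatrix ρ σ).det ≠ 0)
    (hφdvd : ∀ (ρ σ : Fin 3 → Fin m), Function.Injective ρ → Function.Injective σ →
      φ ∣ ((Matrix.of fun a b => ∑ i, X i * C (M i a b)).submatrix ρ σ).det)
    (hφgcd : ∀ ψ : MvPolynomial (Fin h) ℚ,
      (∀ (ρ σ : Fin 3 → Fin m), Function.Injective ρ → Function.Injective σ →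
        ψ ∣ ((Matrix.of fun a b => ∑ i, X i * C (M i a b)).submatrix ρ σ).det) → ψ ∣ φ)
    (hφnc : 0 < φ.totalDegree)
    (hgenrank : Matrix.rank
      (Matrix.of fun a b =>
        algebraMap (MvPolynomial (Fin h) ℚ) (FractionRing (MvPolynomial (Fin h) ℚ))
          (∑ i, X i * C (M i a b)) :
        Matrix (Fin m) (Fin m) (FractionRing (MvPolynomial (Fin h) ℚ))) = r)
    (dvec : Fin m → ℚ) (hM1 : M ⟨0, hh⟩ = Matrix.diagonal dvec)
    (hdvec : ∀ a : Fin m, (a.val < r → dvec a ≠ 0) ∧ (r ≤ a.val → dvec a = 0)) :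
    ∃ T : Matrix (Fin h) (Fin h) ℚ, IsUnit T.det ∧
      Matrix.rank (∑ i, T i ⟨0, hh⟩ • M i) = r ∧
      ∀ c : Fin h → ℚ, c ⟨0, hh⟩ = 0 →
        Matrix.rank (∑ j, ∑ i, (c j * T i j) • M i) ≤ 2 := by
  have hrank : (M ⟨0, hh⟩).rank = r := hM1 ▸ rank_diagonal_eq_of_ne_zero_iff_lt
    (hgenrank ▸ rank_le_height _) fun a => ⟨not_le.1 ∘ mt (hdvec a).2, (hdvec a).1⟩
  simpa only [hrank, Finset.smul_sum, smul_smul] using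
    stmt6_general 2 M ⟨0, hh⟩ (hrank ▸ hr5) φ hφnc hφdvd
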